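/- For all b, b' with 0 < b' < b ≤ π/2 and every real z < 1, one has the strict inequality ξ(b,z) > ξ(b',z); i.e. the regularized Green's function is strictly monotonous across the halflayer: ξ(b,z) > ξ(b',z) whenever |b − π/2| < |b' − π/2|. -/

import Mathlib

open Real Filter Topology Asymptotics

/-- The digamma function `ψ = Γ'/Γ`. -/
noncomputable def digamma (x : ℝ) : ℝ := deriv Real.Gamma x / Real.Gamma x

/-- The regularized Green's function `ξ(b,z)` of a point interaction at height
`b ∈ (0,π)` in the Dirichlet layer `ℝ²×(0,π)`, for energies `z < 1`:
`ξ(b,z) = −(1/π²) Σ_{n≥1} ln√(1 − z/n²)·sin²(n b)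
          + (1/(4π²))·[γ + ψ(b/π) + (π/2)·cot b]`. -/
noncomputable def xiLayer (b z : ℝ) : ℝ :=
  -(1 / π ^ 2) *
      ∑' n : ℕ, Real.log (Real.sqrt (1 - z / ((n : ℝ) + 1) ^ 2)) * Real.sin (((n : ℝ) + 1) * b) ^ 2
    + (1 / (4 * π ^ 2)) *
      (Real.eulerMascheroniConstant + digamma (b / π) + (π / 2) * Real.cot b)

/-!
Put `x = 2b` and write `sin² = (1 - cos 2·) / 2`, so that `b` enters `ξ(b, z)` through
`∑ log (1 - z/n²) cos (n x)` and, by the reflection formula, `ψ(x/2π) + ψ(1 - x/2π)`.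
For `z = -k² ≤ 0` the layer can be replaced by image charges: the difference of two values of `ξ`
is a series of differences of Yukawa kernels `e^{-kr}/r` with `r = 2πm + x` and `r = 2πm + 2π - x`.
At `k = 0` this is the series of the digamma function. For `k > 0` both sides have the same
`k`-derivative, a Fourier series on one side and a geometric series on the other, both summing to
`cosh (k(π - x)) / sinh (kπ)`. Each pair `2πm + x`, `2πm + 2π - x` has a fixed sum and is spread
more widely the farther `x` is from `π`, so strict convexity of the kernel gives the inequality.
For `0 < z = s² < 1` the same Fourier series, now with `cos (s(π - x)) / sin (sπ)`, shows that the
difference does not decrease as `z` grows from `0`.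
-/

section Digamma

variable {x y : ℝ}

theorem hasDerivAt_log_Gamma (hx : 0 < x) : HasDerivAt (log ∘ Gamma) (digamma x) x :=
  (differentiableAt_Gamma fun m ↦ (neg_nonpos.2 m.cast_nonneg |>.trans_lt hx).ne').hasDerivAt.log
    (Gamma_pos_of_pos hx).ne'

theorem log_Gamma_add_one (hx : 0 < x) : log (Gamma (x + 1)) = log (Gamma x) + log x := by
  rw [Gamma_add_one hx.ne', log_mul hx.ne' (Gamma_pos_of_pos hx).ne', add_comm]

theorem digamma_add_one (hx : 0 < x) : digamma (x + 1) = digamma x + 1 / x := by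
  have hleft : HasDerivAt (fun t ↦ log (Gamma (t + 1))) (digamma (x + 1)) x :=
    (hasDerivAt_log_Gamma (add_pos hx one_pos)).comp_add_const x 1
  have hright : HasDerivAt (fun t ↦ log (Gamma t) + log t) (digamma x + 1 / x) x := by
    rw [one_div]
    exact (hasDerivAt_log_Gamma hx).add (hasDerivAt_log hx.ne')
  have heq : (fun t ↦ log (Gamma (t + 1))) =ᶠ[𝓝 x] fun t ↦ log (Gamma t) + log t := by
    filter_upwards [lt_mem_nhds hx] with t ht using log_Gamma_add_one ht
  exact hleft.unique (hright.congr_of_eventuallyEq heq)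

theorem digamma_add_natCast (hx : 0 < x) (M : ℕ) :
    digamma (x + M) = digamma x + ∑ m ∈ Finset.range M, 1 / (x + m) := by
  induction M with
  | zero => simp
  | succ M ih =>
    rw [Finset.sum_range_succ, ← add_assoc, ← ih, ← digamma_add_one (by positivity), Nat.cast_succ,
      add_assoc]

theorem digamma_one_sub (hx : 0 < x) (hx1 : x < 1) :
    digamma (1 - x) = digamma x + π * cot (π * x) := by
  have sin_pos {t : ℝ} (ht : 0 < t) (ht1 : t < 1) : 0 < sin (π * t) :=
    sin_pos_of_pos_of_lt_pi (by positivity) (mul_lt_of_lt_one_right pi_pos ht1)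
  have hGamma : HasDerivAt (fun t ↦ log (Gamma t) + log (Gamma (1 - t)))
      (digamma x + -digamma (1 - x)) x :=
    (hasDerivAt_log_Gamma hx).add ((hasDerivAt_log_Gamma (sub_pos.2 hx1)).comp_const_sub 1 x)
  have hsin : HasDerivAt (fun t ↦ log π - log (sin (π * t)))
      (-(cos (π * x) * (π * 1) / sin (π * x))) x :=
    (((hasDerivAt_id x).const_mul π).sin.log (sin_pos hx hx1).ne').const_sub _
  have heq : (fun t ↦ log π - log (sin (π * t))) =ᶠ[𝓝 x]
      fun t ↦ log (Gamma t) + log (Gamma (1 - t)) := by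
    filter_upwards [lt_mem_nhds hx, gt_mem_nhds hx1] with t ht ht1
    rw [← log_div pi_ne_zero (sin_pos ht ht1).ne', ← Gamma_mul_Gamma_one_sub,
      log_mul (Gamma_pos_of_pos ht).ne' (Gamma_pos_of_pos (sub_pos.2 ht1)).ne']
  have key := hsin.unique (hGamma.congr_of_eventuallyEq heq)
  rw [cot_eq_cos_div_sin]
  linear_combination key

theorem digamma_le_log (hx : 0 < x) : digamma x ≤ log x := by
  have h := convexOn_log_Gamma.le_slope_of_hasDerivAt hx (add_pos hx one_pos) (lt_add_one x)
    (hasDerivAt_log_Gamma hx)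
  simpa [slope_def_field, log_Gamma_add_one hx] using h

theorem log_le_digamma_add_one (hx : 0 < x) : log x ≤ digamma (x + 1) := by
  have h := convexOn_log_Gamma.slope_le_of_hasDerivAt hx (add_pos hx one_pos) (lt_add_one x)
    (hasDerivAt_log_Gamma (add_pos hx one_pos))
  simpa [slope_def_field, log_Gamma_add_one hx] using h

theorem tendsto_digamma_add_sub_log (c : ℝ) :
    Tendsto (fun t ↦ digamma (t + c) - log t) atTop (𝓝 0) := by
  refine tendsto_of_tendsto_of_tendsto_of_le_of_le' (tendsto_log_comp_add_sub_log (c - 1))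
    (tendsto_log_comp_add_sub_log c) ?_ ?_
  · filter_upwards [eventually_gt_atTop (1 - c)] with t ht
    have h := log_le_digamma_add_one (x := t + (c - 1)) (by linarith)
    rw [add_assoc, sub_add_cancel] at h
    gcongr
  · filter_upwards [eventually_gt_atTop (-c)] with t ht
    gcongr
    exact digamma_le_log (by linarith)

theorem hasSum_digamma_sub (hx : 0 < x) (hy : 0 < y) :
    HasSum (fun m : ℕ ↦ 1 / (y + m) - 1 / (x + m)) (digamma x - digamma y) := by
  wlog hyx : y ≤ x generalizing x y
  · simpa only [neg_sub] using (this hy hx (le_of_not_ge hyx)).neg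
  have hnonneg (m : ℕ) : 0 ≤ 1 / (y + m) - 1 / (x + m) := sub_nonneg.2 (by gcongr)
  rw [hasSum_iff_tendsto_nat_of_nonneg hnonneg]
  have hlim : Tendsto (fun M : ℕ ↦ digamma (M + y) - digamma (M + x)) atTop (𝓝 0) := by
    simpa [Function.comp_def] using ((tendsto_digamma_add_sub_log y).sub
      (tendsto_digamma_add_sub_log x)).comp tendsto_natCast_atTop_atTop
  have key := hlim.const_add (digamma x - digamma y)
  rw [add_zero] at key
  refine key.congr fun M ↦ ?_
  rw [add_comm (M : ℝ) y, add_comm (M : ℝ) x, digamma_add_natCast hx, digamma_add_natCast hy,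
    Finset.sum_sub_distrib]
  ring

end Digamma

section FourierCosh

open Complex (I)

variable {w : ℂ}

theorem summable_inv_int_sq_add_sq (w : ℂ) : Summable fun n : ℤ ↦ ((n : ℂ) ^ 2 + w ^ 2)⁻¹ := by
  refine (EisensteinSeries.summable_linear_sub_mul_linear_add (w * I) 1 1).neg.congr fun n ↦ ?_
  rw [← inv_neg]
  congr 1
  push_cast
  linear_combination -w ^ 2 * Complex.I_sq

theorem sub_int_mul_I_ne_zero (hw : Complex.sinh (π * w) ≠ 0) (n : ℤ) : w - n * I ≠ 0 := by
  contrapose! hw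
  rw [sub_eq_zero.1 hw, ← mul_assoc, Complex.sinh_mul_I, mul_comm (π : ℂ),
    Complex.sin_int_mul_pi, zero_mul]

theorem integral_exp_sub_int_mul_I {n : ℤ} (hw : w - n * I ≠ 0) :
    ∫ x in (0 : ℝ)..2 * π, Complex.exp ((w - n * I) * x) =
      (Complex.exp (2 * π * w) - 1) / (w - n * I) := by
  have hperiod : Complex.exp ((w - n * I) * (2 * π)) = Complex.exp (2 * π * w) :=
    Complex.exp_eq_exp_iff_exists_int.2 ⟨-n, by push_cast; ring⟩
  rw [integral_exp_mul_complex hw]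
  push_cast
  rw [hperiod, mul_zero, Complex.exp_zero]

theorem integral_exp_mul_cosh (hw : Complex.sinh (π * w) ≠ 0) (n : ℤ) :
    ∫ x in (0 : ℝ)..2 * π, Complex.exp (-(n * I * x)) * Complex.cosh (w * (π - x)) =
      2 * w * Complex.sinh (π * w) * ((n : ℂ) ^ 2 + w ^ 2)⁻¹ := by
  have hsub : w - n * I ≠ 0 := sub_int_mul_I_ne_zero hw n
  have hadd : -w - n * I ≠ 0 := sub_int_mul_I_ne_zero (by simpa using hw) n
  have hfactor : (n : ℂ) ^ 2 + w ^ 2 = -((w - n * I) * (-w - n * I)) := by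
    linear_combination (n ^ 2 : ℂ) * Complex.I_sq
  have hsplit (x : ℝ) : Complex.exp (-(n * I * x)) * Complex.cosh (w * (π - x)) =
      Complex.exp (-(π * w)) / 2 * Complex.exp ((w - n * I) * x) +
        Complex.exp (π * w) / 2 * Complex.exp ((-w - n * I) * x) := by
    rw [Complex.cosh, div_mul_eq_mul_div, div_mul_eq_mul_div, ← Complex.exp_add,
      ← Complex.exp_add, mul_div_assoc', mul_add, ← Complex.exp_add, ← Complex.exp_add]
    ring_nf
  have hint (c d : ℂ) : IntervalIntegrable (fun x : ℝ ↦ d * Complex.exp (c * x))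
      MeasureTheory.volume 0 (2 * π) :=
    Continuous.intervalIntegrable (by fun_prop) _ _
  have hinv : Complex.exp (π * w) * Complex.exp (-(π * w)) = 1 := by
    rw [← Complex.exp_add, add_neg_cancel, Complex.exp_zero]
  have hdouble (v : ℂ) : Complex.exp (2 * π * v) = Complex.exp (π * v) ^ 2 := by
    rw [← Complex.exp_nat_mul, Nat.cast_two, mul_assoc]
  simp_rw [hsplit]
  rw [intervalIntegral.integral_add (hint _ _) (hint _ _), intervalIntegral.integral_const_mul,
    intervalIntegral.integral_const_mul, integral_exp_sub_int_mul_I hsub,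
    integral_exp_sub_int_mul_I hadd, hfactor, Complex.sinh, hdouble, hdouble, mul_neg]
  generalize Complex.exp (π * w) = E at hinv ⊢
  generalize Complex.exp (-(π * w)) = F at hinv ⊢
  field_simp
  linear_combination (E * (-w - n * I) + F * (w - n * I)) * hinv

theorem fourierCoeffOn_cosh (hw : Complex.sinh (π * w) ≠ 0) (n : ℤ) :
    fourierCoeffOn two_pi_pos (fun x ↦ Complex.cosh (w * (π - x))) n =
      w * Complex.sinh (π * w) / π * ((n : ℂ) ^ 2 + w ^ 2)⁻¹ := by
  have hfourier (x : ℝ) :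
      fourier (-n) (x : AddCircle (2 * π - 0)) = Complex.exp (-(n * I * x)) := by
    rw [fourier_coe_apply]
    congr 1
    push_cast
    field_simp
    ring
  simp_rw [fourierCoeffOn_eq_integral, smul_eq_mul, hfourier, integral_exp_mul_cosh hw,
    Complex.real_smul]
  push_cast
  field_simp
  ring

theorem hasSum_int_fourier_cosh (hw : Complex.sinh (π * w) ≠ 0) {x : ℝ}
    (hx : x ∈ Set.Ico 0 (2 * π)) :
    HasSum (fun n : ℤ ↦ w * Complex.sinh (π * w) / π * ((n : ℂ) ^ 2 + w ^ 2)⁻¹ *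
      Complex.exp (n * x * I)) (Complex.cosh (w * (π - x))) := by
  have : Fact (0 < 2 * π) := ⟨two_pi_pos⟩
  let f : ℝ → ℂ := fun x ↦ Complex.cosh (w * (π - x))
  have hcont : Continuous (AddCircle.liftIco (2 * π) 0 f) := by
    refine AddCircle.liftIco_zero_continuous ?_ (by fun_prop)
    simp only [f]
    rw [← Complex.cosh_neg]
    congr 1
    push_cast
    ring
  have hcoeff (n : ℤ) : fourierCoeff (AddCircle.liftIco (2 * π) 0 f) n =
      w * Complex.sinh (π * w) / π * ((n : ℂ) ^ 2 + w ^ 2)⁻¹ := by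
    rw [fourierCoeff_liftIco_eq, ← fourierCoeffOn_cosh hw]
    congr 1
    rw [zero_add]
  have hsummable : Summable (fourierCoeff (AddCircle.liftIco (2 * π) 0 f)) := by
    rw [funext hcoeff]
    exact (summable_inv_int_sq_add_sq w).mul_left _
  have hseries := has_pointwise_sum_fourier_series_of_summable (f := ⟨_, hcont⟩) hsummable x
  simp only [ContinuousMap.coe_mk, hcoeff, smul_eq_mul, fourier_coe_apply,
    AddCircle.liftIco_zero_coe_apply hx, f] at hseries
  convert! hseries using 4 with n
  push_cast
  field_simp

theorem hasSum_cos_div_sq_add_sq (hw : Complex.sinh (π * w) ≠ 0) {x : ℝ}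
    (hx : x ∈ Set.Ico 0 (2 * π)) :
    HasSum (fun n : ℕ ↦ Complex.cos ((n + 1) * x) / ((n + 1) ^ 2 + w ^ 2))
      (π * Complex.cosh (w * (π - x)) / (2 * w * Complex.sinh (π * w)) - 1 / (2 * w ^ 2)) := by
  have hw0 : w ≠ 0 := by rintro rfl; simp at hw
  have hfold := (hasSum_int_fourier_cosh hw hx).nat_add_neg
  rw [← hasSum_nat_add_iff' 1] at hfold
  convert! hfold.mul_left (π / (2 * w * Complex.sinh (π * w))) using 1
  · ext n
    rw [Complex.cos]
    push_cast
    rw [neg_sq]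
    generalize Complex.sinh (π * w) = S at hw ⊢
    field_simp
  · rw [Finset.sum_range_one]
    push_cast
    generalize Complex.sinh (π * w) = S at hw ⊢
    simp only [neg_zero, zero_mul, Complex.exp_zero]
    field_simp
    ring

end FourierCosh

section RealFourier

variable {x : ℝ}

theorem hasSum_cos_div_sq_add_sq_of_pos {k : ℝ} (hk : 0 < k) (hx : x ∈ Set.Ico 0 (2 * π)) :
    HasSum (fun n : ℕ ↦ cos ((n + 1) * x) / ((n + 1) ^ 2 + k ^ 2))
      (π * cosh (k * (π - x)) / (2 * k * sinh (π * k)) - 1 / (2 * k ^ 2)) := by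
  have hsinh : Complex.sinh (π * k) ≠ 0 := by
    exact_mod_cast (sinh_pos_iff.2 (mul_pos pi_pos hk)).ne'
  exact_mod_cast hasSum_cos_div_sq_add_sq hsinh hx

theorem hasSum_cos_div_sq_sub_sq {s : ℝ} (hs : sin (π * s) ≠ 0) (hx : x ∈ Set.Ico 0 (2 * π)) :
    HasSum (fun n : ℕ ↦ cos ((n + 1) * x) / ((n + 1) ^ 2 - s ^ 2))
      (1 / (2 * s ^ 2) - π * cos (s * (π - x)) / (2 * s * sin (π * s))) := by
  have hsinh : Complex.sinh (π * (s * Complex.I)) ≠ 0 := by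
    rw [← mul_assoc, Complex.sinh_mul_I]
    exact mul_ne_zero (by exact_mod_cast hs) Complex.I_ne_zero
  rw [← Complex.hasSum_ofReal]
  convert! hasSum_cos_div_sq_add_sq hsinh hx using 1
  · ext n
    push_cast
    rw [mul_pow, Complex.I_sq, mul_neg_one, sub_eq_add_neg]
  · rw [mul_right_comm (s : ℂ), ← mul_assoc (π : ℂ), Complex.cosh_mul_I, Complex.sinh_mul_I]
    have hprod (a b : ℂ) : 2 * (a * Complex.I) * (b * Complex.I) = -(2 * a * b) := by
      linear_combination 2 * a * b * Complex.I_sq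
    rw [hprod, mul_pow, Complex.I_sq]
    push_cast
    ring

end RealFourier

section LogSeries

theorem summable_one_div_add_one_sq : Summable fun n : ℕ ↦ 1 / ((n : ℝ) + 1) ^ 2 := by
  exact_mod_cast (summable_nat_add_iff 1).2 (summable_one_div_nat_pow.2 one_lt_two)

theorem mul_add_one_sq_le_sub {r z : ℝ} (hr : 0 ≤ r) (hz : z ≤ r) (n : ℕ) :
    (1 - r) * ((n : ℝ) + 1) ^ 2 ≤ ((n : ℝ) + 1) ^ 2 - z := by
  nlinarith [mul_nonneg hr (n.cast_nonneg (α := ℝ)), sq_nonneg (n : ℝ)]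

theorem hasDerivAt_log_one_sub_div {c z : ℝ} (hc : c ≠ 0) (hz : c - z ≠ 0) :
    HasDerivAt (fun z ↦ log (1 - z / c)) (-(1 / (c - z))) z := by
  have hsub : 1 - z / c ≠ 0 := by rw [one_sub_div hc]; exact div_ne_zero hz hc
  convert! (((hasDerivAt_id z).div_const c).const_sub 1).log hsub using 1
  simp only [id]
  field_simp

theorem hasDerivAt_tsum_log_mul {a : ℕ → ℝ} {C z : ℝ} (ha : ∀ n, |a n| ≤ C) (hz : z < 1) :
    HasDerivAt (fun z ↦ ∑' n : ℕ, log (1 - z / ((n : ℝ) + 1) ^ 2) * a n)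
      (∑' n : ℕ, -(1 / (((n : ℝ) + 1) ^ 2 - z)) * a n) z := by
  obtain ⟨r, hr, hr1⟩ := exists_between (max_lt hz one_pos)
  obtain ⟨hzr, hr0⟩ := max_lt_iff.1 hr
  have hpos (n : ℕ) : 0 < (1 - r) * ((n : ℝ) + 1) ^ 2 := mul_pos (sub_pos.2 hr1) (by positivity)
  have hle (n : ℕ) {y : ℝ} (hy : y < r) := mul_add_one_sq_le_sub hr0.le hy.le n
  refine hasDerivAt_tsum_of_isPreconnected (t := Set.Iio r) (y₀ := 0)
    (summable_one_div_add_one_sq.mul_left (C / (1 - r))) isOpen_Iio isPreconnected_Iio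
    (fun n y hy ↦ (hasDerivAt_log_one_sub_div (by positivity)
      ((hpos n).trans_le (hle n hy)).ne').mul_const _) (fun n y hy ↦ ?_) hr0 (by simp) hzr
  rw [norm_mul, norm_neg, norm_of_nonneg (one_div_nonneg.2 ((hpos n).trans_le (hle n hy)).le)]
  calc 1 / (((n : ℝ) + 1) ^ 2 - y) * |a n| ≤ 1 / ((1 - r) * ((n : ℝ) + 1) ^ 2) * C :=
        mul_le_mul (one_div_le_one_div_of_le (hpos n) (hle n hy)) (ha n) (abs_nonneg _)
          (one_div_nonneg.2 (hpos n).le)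
    _ = C / (1 - r) * (1 / ((n : ℝ) + 1) ^ 2) := by
        rw [one_div_mul_eq_div, div_mul_div_comm, mul_one]

/-- The cosine series `∑ₙ log (1 - z / n²) cos (n x)` over `n ≥ 1`, in terms of which the series
`∑ₙ log √(1 - z / n²) sin² (n b)` of `xiLayer` is expressed, with `x = 0` and `x = 2 b`. -/
noncomputable def logCosSeries (x z : ℝ) : ℝ :=
  ∑' n : ℕ, log (1 - z / ((n : ℝ) + 1) ^ 2) * cos (((n : ℝ) + 1) * x)

variable {x y z : ℝ}

theorem summable_log_mul_cos (x z : ℝ) :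
    Summable fun n : ℕ ↦ log (1 - z / ((n : ℝ) + 1) ^ 2) * cos (((n : ℝ) + 1) * x) := by
  have hlog : Summable fun n : ℕ ↦ log (1 - z / ((n : ℝ) + 1) ^ 2) := by
    refine (Real.summable_log_one_add_of_summable
      (summable_one_div_add_one_sq.mul_left (-z))).congr fun n ↦ ?_
    rw [mul_one_div, neg_div, ← sub_eq_add_neg]
  refine hlog.abs.of_norm_bounded fun n ↦ ?_
  rw [norm_mul]
  exact mul_le_of_le_one_right (abs_nonneg _) (abs_cos_le_one _)

@[simp]
theorem logCosSeries_zero_right (x : ℝ) : logCosSeries x 0 = 0 := by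
  simp [logCosSeries]

theorem hasDerivAt_logCosSeries (x : ℝ) (hz : z < 1) :
    HasDerivAt (logCosSeries x)
      (-∑' n : ℕ, cos (((n : ℝ) + 1) * x) / (((n : ℝ) + 1) ^ 2 - z)) z := by
  convert! hasDerivAt_tsum_log_mul (fun n ↦ abs_cos_le_one (((n : ℝ) + 1) * x)) hz using 1
  simp_rw [← tsum_neg, neg_mul, one_div_mul_eq_div]

theorem continuousOn_logCosSeries (x : ℝ) : ContinuousOn (logCosSeries x) (Set.Iio 1) :=
  fun _ hz ↦ (hasDerivAt_logCosSeries x hz).continuousAt.continuousWithinAt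

theorem hasDerivAt_logCosSeries_sq {s : ℝ} (hs : 0 < s) (hs1 : s < 1)
    (hx : x ∈ Set.Ico 0 (2 * π)) :
    HasDerivAt (logCosSeries x)
      (π * cos (s * (π - x)) / (2 * s * sin (π * s)) - 1 / (2 * s ^ 2)) (s ^ 2) := by
  have hsin : 0 < sin (π * s) :=
    sin_pos_of_pos_of_lt_pi (mul_pos pi_pos hs) (mul_lt_of_lt_one_right pi_pos hs1)
  rw [← neg_sub, ← (hasSum_cos_div_sq_sub_sq hsin.ne' hx).tsum_eq]
  exact hasDerivAt_logCosSeries x (pow_lt_one₀ hs.le hs1 two_ne_zero)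

theorem hasDerivAt_logCosSeries_neg_sq {k : ℝ} (hk : 0 < k) (hx : x ∈ Set.Ico 0 (2 * π)) :
    HasDerivAt (fun k ↦ logCosSeries x (-k ^ 2))
      (π * (cosh (k * (π - x)) / sinh (k * π)) - 1 / k) k := by
  have hderiv := hasDerivAt_logCosSeries x (z := -k ^ 2) (by nlinarith)
  simp_rw [sub_neg_eq_add] at hderiv
  rw [(hasSum_cos_div_sq_add_sq_of_pos hk hx).tsum_eq] at hderiv
  convert! hderiv.comp k (hasDerivAt_pow 2 k).neg using 1
  rw [mul_comm π k]
  push_cast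
  field_simp

theorem cos_mul_le_cos_mul {s α β : ℝ} (hs : 0 ≤ s) (hαβ : |α| ≤ |β|) (hβ : s * |β| ≤ π) :
    cos (s * β) ≤ cos (s * α) := by
  rw [← cos_abs (s * β), ← cos_abs (s * α), abs_mul, abs_mul, abs_of_nonneg hs]
  exact cos_le_cos_of_nonneg_of_le_pi (by positivity) hβ (by gcongr)

theorem monotoneOn_logCosSeries_sub (hx : x ∈ Set.Ico 0 (2 * π)) (hy : y ∈ Set.Ico 0 (2 * π))
    (hxy : |π - x| ≤ |π - y|) :
    MonotoneOn (fun z ↦ logCosSeries x z - logCosSeries y z) (Set.Ico 0 1) := by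
  have hsqrt {z : ℝ} (hz : z ∈ interior (Set.Ico 0 1)) : 0 < √z ∧ √z < 1 := by
    rw [interior_Ico] at hz
    exact ⟨sqrt_pos.2 hz.1, (sqrt_lt' one_pos).2 (by rw [one_pow]; exact hz.2)⟩
  refine monotoneOn_of_hasDerivWithinAt_nonneg (convex_Ico 0 1)
    (((continuousOn_logCosSeries x).sub (continuousOn_logCosSeries y)).mono fun z hz ↦ hz.2)
    (f' := fun z ↦ π * cos (√z * (π - x)) / (2 * √z * sin (π * √z)) -
      π * cos (√z * (π - y)) / (2 * √z * sin (π * √z))) (fun z hz ↦ ?_) fun z hz ↦ ?_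
  all_goals obtain ⟨hs, hs1⟩ := hsqrt hz
  · have hderiv := (hasDerivAt_logCosSeries_sq hs hs1 hx).sub (hasDerivAt_logCosSeries_sq hs hs1 hy)
    rw [sq_sqrt (sqrt_pos.1 hs).le, sub_sub_sub_cancel_right] at hderiv
    exact hderiv.hasDerivWithinAt
  · have hy_le : √z * |π - y| ≤ π :=
      (mul_le_of_le_one_left (abs_nonneg _) hs1.le).trans
        (abs_le.2 ⟨by linarith [hy.2], by linarith [hy.1]⟩)
    have hcos := cos_mul_le_cos_mul hs.le hxy hy_le
    have hsin : 0 < sin (π * √z) :=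
      sin_pos_of_pos_of_lt_pi (mul_pos pi_pos hs) (mul_lt_of_lt_one_right pi_pos hs1)
    rw [sub_nonneg]
    gcongr

end LogSeries

section Yukawa

theorem add_lt_add_of_strictConvexOn {𝕜 : Type*} [Field 𝕜] [LinearOrder 𝕜]
    [IsStrictOrderedRing 𝕜] {s : Set 𝕜} {f : 𝕜 → 𝕜} (hf : StrictConvexOn 𝕜 s f) {x y u v : 𝕜}
    (hx : x ∈ s) (hy : y ∈ s) (hsum : u + v = x + y) (hlt : |u - v| < |x - y|) :
    f u + f v < f x + f y := by
  have hxy : x - y ≠ 0 := abs_pos.1 ((abs_nonneg _).trans_lt hlt)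
  obtain ⟨t, ht⟩ : ∃ t, t = (u - v) / (x - y) := ⟨_, rfl⟩
  have habs : |t| < 1 := by rwa [ht, abs_div, div_lt_one (abs_pos.2 hxy)]
  have hplus : 0 < (1 + t) / 2 := half_pos (by linarith [neg_lt_of_abs_lt habs])
  have hminus : 0 < (1 - t) / 2 := half_pos (by linarith [lt_of_abs_lt habs])
  have hdiff : t * (x - y) = u - v := by rw [ht, div_mul_cancel₀ _ hxy]
  have hu : (1 + t) / 2 * x + (1 - t) / 2 * y = u := by linear_combination hdiff / 2 - hsum / 2
  have hv : (1 - t) / 2 * x + (1 + t) / 2 * y = v := by linear_combination -hdiff / 2 - hsum / 2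
  have hfu := hf.2 hx hy (sub_ne_zero.1 hxy) hplus hminus (by ring)
  have hfv := hf.2 hx hy (sub_ne_zero.1 hxy) hminus hplus (by ring)
  simp only [smul_eq_mul, hu, hv] at hfu hfv
  linear_combination hfu + hfv

theorem strictConvexOn_exp_comp {E : Type*} [AddCommMonoid E] [SMul ℝ E] {s : Set E} {f : E → ℝ}
    (hf : StrictConvexOn ℝ s f) : StrictConvexOn ℝ s fun x ↦ exp (f x) :=
  ⟨hf.1, fun _ hx _ hy hxy _ _ ha hb hab ↦
    (exp_strictMono (hf.2 hx hy hxy ha hb hab)).trans_le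
      (convexOn_exp.2 trivial trivial ha.le hb.le hab)⟩

/-- The Yukawa kernel `e^{-kr} / r`, the (unnormalised) Green's function of `-Δ + k²` in three
dimensions. -/
noncomputable def yukawa (k r : ℝ) : ℝ := exp (-(k * r)) / r

variable {d k x y : ℝ}

@[simp]
theorem yukawa_zero_left (r : ℝ) : yukawa 0 r = 1 / r := by
  simp [yukawa]

theorem strictConvexOn_yukawa (k : ℝ) : StrictConvexOn ℝ (Set.Ioi 0) (yukawa k) := by
  have hlinear : ConvexOn ℝ (Set.Ioi 0) fun r : ℝ ↦ -(k * r) :=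
    ((LinearMap.mul ℝ ℝ (-k)).convexOn (convex_Ioi 0)).congr fun r _ ↦ by simp
  have hexponent : StrictConvexOn ℝ (Set.Ioi 0) fun r ↦ -(k * r) + -log r :=
    hlinear.add_strictConvexOn strictConcaveOn_log_Ioi.neg
  refine (strictConvexOn_exp_comp hexponent).congr fun r hr ↦ ?_
  beta_reduce
  rw [← sub_eq_add_neg, exp_sub, exp_log hr, yukawa]

theorem hasDerivAt_yukawa_left {r : ℝ} (hr : r ≠ 0) (k : ℝ) :
    HasDerivAt (fun k ↦ yukawa k r) (-exp (-(k * r))) k := by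
  convert! (((hasDerivAt_id k).mul_const r).neg.exp).div_const r using 1
  simp only [Pi.neg_apply, id]
  field_simp

theorem abs_yukawa_sub_yukawa_le (hk : 0 ≤ k) (hx : 0 < x) (hy : 0 < y) :
    |yukawa k x - yukawa k y| ≤ |1 / x - 1 / y| := by
  wlog hxy : x ≤ y generalizing x y
  · rw [abs_sub_comm, abs_sub_comm (1 / x)]
    exact this hy hx (le_of_not_ge hxy)
  have hnonneg : 0 ≤ yukawa k x - yukawa k y := by
    rw [sub_nonneg]
    unfold yukawa
    gcongr
  have hanti : AntitoneOn (fun k ↦ yukawa k x - yukawa k y) (Set.Ici 0) := by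
    have hderiv (k : ℝ) := (hasDerivAt_yukawa_left hx.ne' k).sub (hasDerivAt_yukawa_left hy.ne' k)
    refine antitoneOn_of_hasDerivWithinAt_nonpos (convex_Ici 0)
      (fun k _ ↦ (hderiv k).continuousAt.continuousWithinAt)
      (fun k _ ↦ (hderiv k).hasDerivWithinAt) fun k hk ↦ ?_
    rw [interior_Ici, Set.mem_Ioi] at hk
    rw [neg_sub_neg, sub_nonpos]
    gcongr
  have hle := hanti Set.self_mem_Ici hk hk
  simp only [yukawa_zero_left] at hle
  rwa [abs_of_nonneg hnonneg, abs_of_nonneg (hnonneg.trans hle)]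

/-- The difference at `x` and `y` of the potentials of a half-infinite chain of Yukawa sources
with spacing `d`, the `m`-th source being at distance `d m + x` from `x` and `d m + y` from `y`.
The potentials are subtracted term by term since each one alone diverges at `k = 0`. -/
noncomputable def yukawaChain (d x y k : ℝ) : ℝ :=
  ∑' m : ℕ, (yukawa k (d * m + x) - yukawa k (d * m + y))

theorem hasSum_one_div_mul_add_sub (hd : 0 < d) (hx : 0 < x) (hy : 0 < y) :
    HasSum (fun m : ℕ ↦ 1 / (d * m + x) - 1 / (d * m + y))
      ((digamma (y / d) - digamma (x / d)) / d) := by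
  convert! (hasSum_digamma_sub (div_pos hy hd) (div_pos hx hd)).div_const d using 1
  ext m
  field_simp
  ring_nf

theorem yukawaChain_zero_right (hd : 0 < d) (hx : 0 < x) (hy : 0 < y) :
    yukawaChain d x y 0 = (digamma (y / d) - digamma (x / d)) / d := by
  simp only [yukawaChain, yukawa_zero_left, (hasSum_one_div_mul_add_sub hd hx hy).tsum_eq]

theorem norm_yukawaChain_term_le (hd : 0 < d) (hx : 0 < x) (hy : 0 < y) (hk : 0 ≤ k) (m : ℕ) :
    ‖yukawa k (d * m + x) - yukawa k (d * m + y)‖ ≤ |1 / (d * m + x) - 1 / (d * m + y)| :=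
  abs_yukawa_sub_yukawa_le hk (by positivity) (by positivity)

theorem summable_yukawaChain (hd : 0 < d) (hx : 0 < x) (hy : 0 < y) (hk : 0 ≤ k) :
    Summable fun m : ℕ ↦ yukawa k (d * m + x) - yukawa k (d * m + y) :=
  (hasSum_one_div_mul_add_sub hd hx hy).summable.abs.of_norm_bounded
    (norm_yukawaChain_term_le hd hx hy hk)

theorem continuousOn_yukawaChain (hd : 0 < d) (hx : 0 < x) (hy : 0 < y) :
    ContinuousOn (yukawaChain d x y) (Set.Ici 0) := by
  have hcont (c : ℝ) : Continuous fun k ↦ yukawa k c := by unfold yukawa; fun_prop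
  exact continuousOn_tsum (fun m ↦ ((hcont _).sub (hcont _)).continuousOn)
    (hasSum_one_div_mul_add_sub hd hx hy).summable.abs
    fun m k hk ↦ norm_yukawaChain_term_le hd hx hy hk m

theorem hasSum_exp_neg_mul_add (hkd : 0 < k * d) (x : ℝ) :
    HasSum (fun m : ℕ ↦ exp (-(k * (d * m + x)))) (exp (-(k * x)) / (1 - exp (-(k * d)))) := by
  convert! (hasSum_geometric_of_lt_one (exp_nonneg (-(k * d)))
    (exp_lt_one_iff.2 (neg_lt_zero.2 hkd))).mul_left (exp (-(k * x))) using 1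
  ext m
  rw [← exp_nat_mul, ← exp_add]
  ring_nf

theorem hasDerivAt_yukawaChain (hd : 0 < d) (hx : 0 < x) (hy : 0 < y) (hk : 0 < k) :
    HasDerivAt (yukawaChain d x y)
      ((exp (-(k * y)) - exp (-(k * x))) / (1 - exp (-(k * d)))) k := by
  have hbound {z t : ℝ} (hz : 0 < z) (ht : k / 2 < t) (m : ℕ) :
      ‖-exp (-(t * (d * m + z)))‖ ≤ exp (-(k / 2 * (d * m + z))) := by
    rw [norm_neg, norm_of_nonneg (exp_nonneg _)]
    gcongr
  have hsum := hasSum_exp_neg_mul_add (mul_pos (half_pos hk) hd)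
  rw [sub_div, ← neg_sub_neg, ← (hasSum_exp_neg_mul_add (mul_pos hk hd) x).neg.sub
    (hasSum_exp_neg_mul_add (mul_pos hk hd) y).neg |>.tsum_eq]
  exact hasDerivAt_tsum_of_isPreconnected ((hsum x).summable.add (hsum y).summable) isOpen_Ioi
    isPreconnected_Ioi
    (fun m t _ ↦ (hasDerivAt_yukawa_left (by positivity) t).sub
      (hasDerivAt_yukawa_left (by positivity) t))
    (fun m t ht ↦ (norm_sub_le _ _).trans (add_le_add (hbound hx ht m) (hbound hy ht m)))
    (Set.mem_Ioi.2 (half_lt_self hk)) (summable_yukawaChain hd hx hy hk.le)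
    (Set.mem_Ioi.2 (half_lt_self hk))

end Yukawa

section Comparison

/-- The part of `xiLayer b z` that depends on `b`, in the variable `x = 2 b`: by
`xiLayer_eq_reducedXi`, the two differ by an affine map whose coefficients depend only on `z`. -/
noncomputable def reducedXi (x z : ℝ) : ℝ :=
  logCosSeries x z + (digamma (x / (2 * π)) + digamma (1 - x / (2 * π))) / 2

variable {x y z k : ℝ}

theorem exp_add_exp_div_one_sub_exp (k x : ℝ) :
    (exp (-(k * x)) + exp (-(k * (2 * π - x)))) / (1 - exp (-(k * (2 * π)))) =
      cosh (k * (π - x)) / sinh (k * π) := by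
  have hden : 1 - exp (-(k * (2 * π))) = (exp (k * π) - exp (-(k * π))) * exp (-(k * π)) := by
    rw [sub_mul, ← exp_add, ← exp_add, add_neg_cancel, exp_zero]
    ring_nf
  have hnum : exp (-(k * x)) + exp (-(k * (2 * π - x))) =
      (exp (k * (π - x)) + exp (-(k * (π - x)))) * exp (-(k * π)) := by
    rw [add_mul, ← exp_add, ← exp_add]
    ring_nf
  rw [hnum, hden, mul_div_mul_right _ _ (exp_ne_zero _), cosh_eq, sinh_eq,
    div_div_div_cancel_right₀ two_ne_zero]

theorem hasDerivAt_reducedXi_neg_sq_sub (hx : x ∈ Set.Ioo 0 (2 * π)) (hy : y ∈ Set.Ioo 0 (2 * π))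
    (hk : 0 < k) :
    HasDerivAt (fun k ↦ reducedXi x (-k ^ 2) - reducedXi y (-k ^ 2))
      (π * (cosh (k * (π - x)) / sinh (k * π) - cosh (k * (π - y)) / sinh (k * π))) k := by
  convert! ((hasDerivAt_logCosSeries_neg_sq hk (Set.Ioo_subset_Ico_self hx)).add_const _).sub
    ((hasDerivAt_logCosSeries_neg_sq hk (Set.Ioo_subset_Ico_self hy)).add_const _) using 1
  ring

theorem hasDerivAt_yukawaChain_add (hx : x ∈ Set.Ioo 0 (2 * π)) (hy : y ∈ Set.Ioo 0 (2 * π))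
    (hk : 0 < k) :
    HasDerivAt (fun k ↦ yukawaChain (2 * π) y x k + yukawaChain (2 * π) (2 * π - y) (2 * π - x) k)
      (cosh (k * (π - x)) / sinh (k * π) - cosh (k * (π - y)) / sinh (k * π)) k := by
  convert! (hasDerivAt_yukawaChain two_pi_pos hy.1 hx.1 hk).add
    (hasDerivAt_yukawaChain two_pi_pos (sub_pos.2 hy.2) (sub_pos.2 hx.2) hk) using 1
  rw [← exp_add_exp_div_one_sub_exp, ← exp_add_exp_div_one_sub_exp]
  ring

theorem reducedXi_neg_sq_sub (hx : x ∈ Set.Ioo 0 (2 * π)) (hy : y ∈ Set.Ioo 0 (2 * π))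
    (hk : 0 ≤ k) :
    reducedXi x (-k ^ 2) - reducedXi y (-k ^ 2) =
      π * (yukawaChain (2 * π) y x k + yukawaChain (2 * π) (2 * π - y) (2 * π - x) k) := by
  let lhs (k : ℝ) := reducedXi x (-k ^ 2) - reducedXi y (-k ^ 2)
  let rhs (k : ℝ) := π * (yukawaChain (2 * π) y x k + yukawaChain (2 * π) (2 * π - y) (2 * π - x) k)
  have hzero : lhs 0 = rhs 0 := by
    simp only [lhs, rhs, reducedXi, zero_pow two_ne_zero, neg_zero, logCosSeries_zero_right,
      yukawaChain_zero_right two_pi_pos hy.1 hx.1,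
      yukawaChain_zero_right two_pi_pos (sub_pos.2 hy.2) (sub_pos.2 hx.2), sub_div,
      div_self two_pi_pos.ne']
    field_simp
    ring
  obtain rfl | hk := hk.eq_or_lt
  · exact hzero
  have hcont : ContinuousOn (fun k ↦ lhs k - rhs k) (Set.Icc 0 k) := by
    have hlog (x : ℝ) : Continuous fun k : ℝ ↦ logCosSeries x (-k ^ 2) :=
      (continuousOn_logCosSeries x).comp_continuous (by fun_prop) fun k ↦ by
        rw [Set.mem_Iio]; nlinarith [sq_nonneg k]
    refine ContinuousOn.sub (Continuous.continuousOn ?_) (.mono ?_ Set.Icc_subset_Ici_self)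
    · exact ((hlog x).add continuous_const).sub ((hlog y).add continuous_const)
    · exact continuousOn_const.mul ((continuousOn_yukawaChain two_pi_pos hy.1 hx.1).add
        (continuousOn_yukawaChain two_pi_pos (sub_pos.2 hy.2) (sub_pos.2 hx.2)))
  obtain ⟨c, -, hc⟩ := exists_hasDerivAt_eq_slope _ _ hk hcont fun c hc ↦
    (hasDerivAt_reducedXi_neg_sq_sub hx hy hc.1).sub
      ((hasDerivAt_yukawaChain_add hx hy hc.1).const_mul π)
  rw [sub_self, hzero, sub_self, sub_zero, sub_zero, eq_comm, div_eq_zero_iff] at hc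
  exact sub_eq_zero.1 (hc.resolve_right hk.ne')

theorem yukawaChain_add_pos (hx : x ∈ Set.Ioo 0 (2 * π)) (hy : y ∈ Set.Ioo 0 (2 * π))
    (hxy : |π - x| < |π - y|) (hk : 0 ≤ k) :
    0 < yukawaChain (2 * π) y x k + yukawaChain (2 * π) (2 * π - y) (2 * π - x) k := by
  have hsummable := summable_yukawaChain two_pi_pos hy.1 hx.1 hk
  have hsummable' := summable_yukawaChain two_pi_pos (sub_pos.2 hy.2) (sub_pos.2 hx.2) hk
  have hpos (m : ℕ) : 0 < yukawa k (2 * π * m + y) - yukawa k (2 * π * m + x) +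
      (yukawa k (2 * π * m + (2 * π - y)) - yukawa k (2 * π * m + (2 * π - x))) := by
    have hmem {c : ℝ} (hc : 0 < c) : 2 * π * m + c ∈ Set.Ioi 0 := Set.mem_Ioi.2 (by positivity)
    have hdist (c : ℝ) :
        |2 * π * m + (2 * π - c) - (2 * π * m + c)| = 2 * |π - c| := by
      rw [← abs_two, ← abs_mul]
      ring_nf
    have hconvex := add_lt_add_of_strictConvexOn (strictConvexOn_yukawa k)
      (hmem (sub_pos.2 hy.2)) (hmem hy.1)
      (u := 2 * π * m + (2 * π - x)) (v := 2 * π * m + x) (by ring)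
      (by rw [hdist, hdist]; gcongr)
    linear_combination hconvex
  rw [yukawaChain, yukawaChain, ← hsummable.tsum_add hsummable']
  exact (hsummable.add hsummable').tsum_pos (fun m ↦ (hpos m).le) 0 (hpos 0)

theorem reducedXi_lt_reducedXi (hx : x ∈ Set.Ioo 0 (2 * π)) (hy : y ∈ Set.Ioo 0 (2 * π))
    (hxy : |π - x| < |π - y|) (hz : z < 1) : reducedXi y z < reducedXi x z := by
  have hnonpos {z : ℝ} (hz : z ≤ 0) : reducedXi y z < reducedXi x z := by
    obtain ⟨k, hk, rfl⟩ : ∃ k, 0 ≤ k ∧ z = -k ^ 2 :=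
      ⟨√(-z), sqrt_nonneg _, by rw [sq_sqrt (neg_nonneg.2 hz), neg_neg]⟩
    rw [← sub_pos, reducedXi_neg_sq_sub hx hy hk]
    exact mul_pos pi_pos (yukawaChain_add_pos hx hy hxy hk)
  obtain hz0 | hz0 := le_total z 0
  · exact hnonpos hz0
  · have hmono := monotoneOn_logCosSeries_sub (Set.Ioo_subset_Ico_self hx)
      (Set.Ioo_subset_Ico_self hy) hxy.le ⟨le_rfl, one_pos⟩ ⟨hz0, hz⟩ hz0
    have hzero := hnonpos le_rfl
    unfold reducedXi at hzero ⊢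
    linarith

end Comparison

theorem tsum_log_sqrt_mul_sin_sq {z : ℝ} (hz : z < 1) (b : ℝ) :
    ∑' n : ℕ, log (√(1 - z / ((n : ℝ) + 1) ^ 2)) * sin (((n : ℝ) + 1) * b) ^ 2 =
      (logCosSeries 0 z - logCosSeries (2 * b) z) / 4 := by
  rw [logCosSeries, logCosSeries,
    ← (summable_log_mul_cos 0 z).tsum_sub (summable_log_mul_cos (2 * b) z), ← tsum_div_const]
  refine tsum_congr fun n ↦ ?_
  have hnonneg : 0 ≤ 1 - z / ((n : ℝ) + 1) ^ 2 :=
    sub_nonneg.2 ((div_le_one (by positivity)).2 (by nlinarith [n.cast_nonneg (α := ℝ)]))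
  rw [log_sqrt hnonneg, sin_sq_eq_half_sub, mul_zero, cos_zero, mul_left_comm]
  ring

theorem xiLayer_eq_reducedXi {b z : ℝ} (hb : b ∈ Set.Ioo 0 π) (hz : z < 1) :
    xiLayer b z =
      1 / (4 * π ^ 2) * (reducedXi (2 * b) z - logCosSeries 0 z + eulerMascheroniConstant) := by
  have hreflect := digamma_one_sub (div_pos hb.1 pi_pos) ((div_lt_one pi_pos).2 hb.2)
  rw [mul_div_cancel₀ _ pi_ne_zero] at hreflect
  rw [xiLayer, tsum_log_sqrt_mul_sin_sq hz, reducedXi, mul_div_mul_left _ _ two_ne_zero, hreflect]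
  ring

theorem xiLayer_monotone_halflayer_general {b b' z : ℝ} (hb' : b' ∈ Set.Ioo 0 π)
    (hdist : |b - π / 2| < |b' - π / 2|) (hz : z < 1) : xiLayer b' z < xiLayer b z := by
  have hb : b ∈ Set.Ioo 0 π := by
    have hhalf : |b' - π / 2| < π / 2 := abs_lt.2 ⟨by linarith [hb'.1], by linarith [hb'.2]⟩
    obtain ⟨hlower, hupper⟩ := abs_lt.1 (hdist.trans hhalf)
    exact ⟨by linarith, by linarith⟩
  have hdouble {c : ℝ} (hc : c ∈ Set.Ioo 0 π) : 2 * c ∈ Set.Ioo 0 (2 * π) :=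
    ⟨mul_pos two_pos hc.1, mul_lt_mul_of_pos_left hc.2 two_pos⟩
  have habs (c : ℝ) : |π - 2 * c| = 2 * |c - π / 2| := by
    rw [abs_sub_comm, ← abs_two, ← abs_mul]
    ring_nf
  have hlt : reducedXi (2 * b') z < reducedXi (2 * b) z :=
    reducedXi_lt_reducedXi (hdouble hb) (hdouble hb') (by rw [habs, habs]; gcongr) hz
  rw [xiLayer_eq_reducedXi hb hz, xiLayer_eq_reducedXi hb' hz]
  gcongr

/-- Strict monotonicity of the regularized Green's function across the halflayer:
for `0 < b' < b ≤ π/2` and `z < 1` one has `ξ(b,z) > ξ(b',z)`. -/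
theorem xiLayer_monotone_halflayer (b b' z : ℝ) (hb'0 : 0 < b') (hb'b : b' < b)
    (hb : b ≤ π / 2) (hz : z < 1) :
    xiLayer b' z < xiLayer b z := by
  refine xiLayer_monotone_halflayer_general ⟨hb'0, by linarith [pi_pos]⟩ ?_ hz
  rw [abs_of_nonpos (by linarith), abs_of_neg (by linarith)]
  linarith
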